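/- arXiv:2411.07125 — 5 statements merged into one kernel-verified Lean document; each statement's English description precedes it below -/
import Mathlib

section
/- For every real p with 0 < p < 1 and every C > 0 there exist c > 0 and N ∈ ℕ such that for all u ≥ N and all natural numbers r ≤ u with |r − p·u| ≤ C·√u, the binomial probability satisfies (u choose r) · p^r · (1−p)^{u−r} ≥ c / √u. -/
noncomputable section

/-!
Stirling's formula with explicit constants shows that, for `m + n = u`, the binomial law with
success probability `m / u` gives its mean `m` mass at least `1 / (e² √u)`. Passing from success
probability `m / u` to `p` costs the factor `exp (-u D)`, where `D` is the relative entropy of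
`(m / u, n / u)` with respect to `(p, 1 - p)`. Relative entropy is at most the `χ²`-divergence, so
this factor is at least `exp (-(m - p u)² / (p (1 - p) u))`, which is bounded below when
`m - p u = O(√u)`.
-/

section Stirling

open Real
open scoped Nat

/-- The shift in `√(n + 1)` covers `n = 0`. -/
lemma factorial_le_stirling (n : ℕ) : (n ! : ℝ) ≤ exp 1 * √(n + 1) * (n / exp 1) ^ n := by
  obtain _ | k := n
  · simp
  have h : Stirling.stirlingSeq (k + 1) ≤ exp 1 / √2 :=
    Stirling.stirlingSeq_one ▸ Stirling.stirlingSeq'_antitone k.zero_le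
  rw [Stirling.stirlingSeq, div_le_iff₀ (by positivity)] at h
  calc ((k + 1)! : ℝ)
      ≤ exp 1 / √2 * (√(2 * (k + 1 : ℕ)) * ((k + 1 : ℕ) / exp 1) ^ (k + 1)) := h
    _ = exp 1 * √(k + 1 : ℕ) * ((k + 1 : ℕ) / exp 1) ^ (k + 1) := by
        rw [sqrt_mul zero_le_two]; field_simp
    _ ≤ exp 1 * √((k + 1 : ℕ) + 1) * ((k + 1 : ℕ) / exp 1) ^ (k + 1) := by
        gcongr; linarith

lemma sqrt_add_one_mul_sqrt_add_one_le {x y : ℝ} (hx : 0 ≤ x) (hy : 0 ≤ y) (hxy : 1 ≤ x + y) :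
    √(x + 1) * √(y + 1) ≤ 3 / 2 * (x + y) := by
  have amgm := two_mul_le_add_sq √(x + 1) √(y + 1)
  rw [sq_sqrt (by positivity), sq_sqrt (by positivity)] at amgm
  linarith

lemma factorial_mul_factorial_le {m n : ℕ} (h : m + n ≠ 0) :
    (m ! * n ! : ℝ) ≤
      3 / 2 * exp 1 ^ 2 * (m + n : ℕ) * ((m : ℝ) ^ m * (n : ℝ) ^ n / exp 1 ^ (m + n)) := by
  have one_le : (1 : ℝ) ≤ m + n := by exact_mod_cast Nat.one_le_iff_ne_zero.mpr h
  calc (m ! * n ! : ℝ)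
      ≤ (exp 1 * √(m + 1) * (m / exp 1) ^ m) * (exp 1 * √(n + 1) * (n / exp 1) ^ n) := by
        gcongr <;> exact factorial_le_stirling _
    _ = exp 1 ^ 2 * (√(m + 1) * √(n + 1)) * ((m : ℝ) ^ m * (n : ℝ) ^ n / exp 1 ^ (m + n)) := by
        rw [div_pow, div_pow, pow_add]; field_simp
    _ ≤ exp 1 ^ 2 * (3 / 2 * (m + n)) * ((m : ℝ) ^ m * (n : ℝ) ^ n / exp 1 ^ (m + n)) := by
        gcongr _ * ?_ * _
        exact sqrt_add_one_mul_sqrt_add_one_le m.cast_nonneg n.cast_nonneg one_le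
    _ = _ := by push_cast; ring

/-- The constant `√(2π)` is weakened to `3 / 2` to cancel that of `factorial_mul_factorial_le`. -/
lemma sqrt_mul_pow_le_factorial (n : ℕ) : 3 / 2 * √n * (n / exp 1) ^ n ≤ n ! := by
  have const_le : 3 / 2 ≤ √(2 * π) := le_sqrt_of_sq_le (by linarith [pi_gt_three])
  calc 3 / 2 * √n * (n / exp 1) ^ n
      ≤ √(2 * π) * √n * (n / exp 1) ^ n := by gcongr
    _ = √(2 * π * n) * (n / exp 1) ^ n := by rw [sqrt_mul (by positivity) (n : ℝ)]
    _ ≤ n ! := Stirling.le_factorial_stirling n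

lemma add_pow_le_choose_mul_pow_mul_pow {m n : ℕ} (h : m + n ≠ 0) :
    ((m + n : ℕ) : ℝ) ^ (m + n) ≤
      exp 1 ^ 2 * √(m + n : ℕ) * (m + n).choose m * ((m : ℝ) ^ m * (n : ℝ) ^ n) := by
  have choose_mul : ((m + n).choose m : ℝ) * (m ! * n !) = (m + n)! := by
    rw [← mul_assoc, Nat.choose_symm_add]
    exact_mod_cast Nat.add_choose_mul_factorial_mul_factorial m n
  have pos : (0 : ℝ) < (m + n : ℕ) := Nat.cast_pos.mpr (Nat.pos_of_ne_zero h)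
  have stirling := calc
    3 / 2 * √(m + n : ℕ) * ((m + n : ℕ) / exp 1) ^ (m + n)
      ≤ (m + n).choose m * (m ! * n !) := choose_mul ▸ sqrt_mul_pow_le_factorial (m + n)
    _ ≤ (m + n).choose m * (3 / 2 * exp 1 ^ 2 * (m + n : ℕ) *
          ((m : ℝ) ^ m * (n : ℝ) ^ n / exp 1 ^ (m + n))) := by
        gcongr _ * ?_
        exact factorial_mul_factorial_le h
  refine le_of_mul_le_mul_left ?_
    (by positivity : 0 < 3 / 2 * √(m + n : ℕ) / exp 1 ^ (m + n))
  calc _ = 3 / 2 * √(m + n : ℕ) * ((m + n : ℕ) / exp 1) ^ (m + n) := by rw [div_pow]; ring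
    _ ≤ _ := stirling
    _ = (m + n).choose m * (3 / 2 * exp 1 ^ 2 * (√(m + n : ℕ) * √(m + n : ℕ)) *
          ((m : ℝ) ^ m * (n : ℝ) ^ n / exp 1 ^ (m + n))) := by rw [mul_self_sqrt pos.le]
    _ = _ := by ring

end Stirling

section ChiSquare

open Real

lemma mul_exp_one_sub_div_le (x : ℝ) {a : ℝ} (ha : 0 < a) : x * exp (1 - x / a) ≤ a := by
  have h : x / a ≤ exp (x / a - 1) := by linarith [add_one_le_exp (x / a - 1)]
  rwa [← neg_sub, exp_neg, ← div_eq_mul_inv, div_le_iff₀ (exp_pos _), mul_comm,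
    ← div_le_iff₀ ha]

lemma pow_mul_exp_le_pow {x a : ℝ} (hx : 0 ≤ x) (ha : 0 < a) (n : ℕ) :
    x ^ n * exp (n * (1 - x / a)) ≤ a ^ n := by
  rw [exp_nat_mul, ← mul_pow]
  gcongr
  exact mul_exp_one_sub_div_le x ha

/-- The exponential form of the bound of relative entropy by the `χ²`-divergence,
`m log (m / a) + n log (n / b) ≤ (m - a)² / a + (n - b)² / b`. -/
lemma pow_mul_pow_mul_exp_le {m n : ℕ} {a b : ℝ} (ha : 0 < a) (hb : 0 < b)
    (h : (m + n : ℝ) = a + b) :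
    (m : ℝ) ^ m * (n : ℝ) ^ n * exp (-((m - a) ^ 2 * (1 / a + 1 / b))) ≤ a ^ m * b ^ n := by
  have exponent : -((m - a) ^ 2 * (1 / a + 1 / b)) = m * (1 - m / a) + n * (1 - n / b) := by
    obtain rfl : b = m + n - a := by linarith
    field_simp
    ring
  calc (m : ℝ) ^ m * (n : ℝ) ^ n * exp (-((m - a) ^ 2 * (1 / a + 1 / b)))
      = ((m : ℝ) ^ m * exp (m * (1 - m / a))) * ((n : ℝ) ^ n * exp (n * (1 - n / b))) := by
        rw [exponent, exp_add]; ring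
    _ ≤ a ^ m * b ^ n := by
        gcongr
        · exact pow_mul_exp_le_pow m.cast_nonneg ha m
        · exact pow_mul_exp_le_pow n.cast_nonneg hb n

end ChiSquare

section Binomial

open Real

lemma exp_neg_div_le_choose_mul_pow_mul_pow {p : ℝ} (hp0 : 0 < p) (hp1 : p < 1) {u r : ℕ}
    (hu : u ≠ 0) (hr : r ≤ u) :
    exp (-((r - p * u) ^ 2 / (p * (1 - p) * u))) / (exp 1 ^ 2 * √u) ≤
      u.choose r * p ^ r * (1 - p) ^ (u - r) := by
  obtain ⟨s, rfl⟩ := Nat.exists_eq_add_of_le hr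
  rw [Nat.add_sub_cancel_left]
  have stirling := add_pow_le_choose_mul_pow_mul_pow hu
  have sum_eq : ((r + s : ℕ) : ℝ) = r + s := Nat.cast_add r s
  have pos : (0 : ℝ) < (r + s : ℕ) := Nat.cast_pos.mpr (Nat.pos_of_ne_zero hu)
  set U : ℝ := ((r + s : ℕ) : ℝ)
  have hq : 0 < 1 - p := sub_pos.mpr hp1
  have chiSquare := pow_mul_pow_mul_exp_le (m := r) (n := s) (mul_pos hp0 pos) (mul_pos hq pos)
    (by linarith)
  have exponent : (r - p * U) ^ 2 * (1 / (p * U) + 1 / ((1 - p) * U)) =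
      (r - p * U) ^ 2 / (p * (1 - p) * U) := by
    field_simp
    ring
  rw [exponent] at chiSquare
  set E := exp (-((r - p * U) ^ 2 / (p * (1 - p) * U)))
  rw [div_le_iff₀ (by positivity)]
  refine le_of_mul_le_mul_left ?_ (pow_pos pos (r + s))
  calc U ^ (r + s) * E
      ≤ exp 1 ^ 2 * √U * (r + s).choose r * ((r : ℝ) ^ r * (s : ℝ) ^ s) * E := by gcongr
    _ = exp 1 ^ 2 * √U * (r + s).choose r * ((r : ℝ) ^ r * (s : ℝ) ^ s * E) := by ring
    _ ≤ exp 1 ^ 2 * √U * (r + s).choose r * ((p * U) ^ r * ((1 - p) * U) ^ s) := by gcongr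
    _ = U ^ (r + s) * ((r + s).choose r * p ^ r * (1 - p) ^ s * (exp 1 ^ 2 * √U)) := by
        rw [mul_pow, mul_pow, pow_add]; ring

end Binomial

/-- a crude local-CLT lower bound for binomial point probabilities:
for `0 < p < 1` and `C > 0` there are `c > 0` and `N` such that for all `u ≥ N` and
`r ≤ u` with `|r - pu| ≤ C√u`, we have `C(u,r) p^r (1-p)^{u-r} ≥ c/√u`. -/
theorem binomial_point_lower_bound (p : ℝ) (hp0 : 0 < p) (hp1 : p < 1)
    (C : ℝ) (hC : 0 < C) :
    ∃ c : ℝ, 0 < c ∧ ∃ N : ℕ, ∀ u : ℕ, N ≤ u → ∀ r : ℕ, r ≤ u →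
      |(r : ℝ) - p * u| ≤ C * Real.sqrt u →
      c / Real.sqrt u ≤ (Nat.choose u r : ℝ) * p ^ r * (1 - p) ^ (u - r) := by
  refine ⟨Real.exp (-(C ^ 2 / (p * (1 - p)))) / Real.exp 1 ^ 2, by positivity, 1, ?_⟩
  intro u hu r hr deviation
  have hq : 0 < 1 - p := sub_pos.mpr hp1
  have u_pos : (0 : ℝ) < u := Nat.cast_pos.mpr hu
  have deviation_sq : (r - p * u) ^ 2 ≤ C ^ 2 * u := calc
    (r - p * u) ^ 2 ≤ (C * √u) ^ 2 := sq_le_sq.mpr (deviation.trans (le_abs_self _))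
    _ = C ^ 2 * u := by rw [mul_pow, Real.sq_sqrt u_pos.le]
  have exponent_le : (r - p * u) ^ 2 / (p * (1 - p) * u) ≤ C ^ 2 / (p * (1 - p)) := by
    rw [← mul_div_mul_right (C ^ 2) _ u_pos.ne']
    exact div_le_div_of_nonneg_right deviation_sq (mul_pos (mul_pos hp0 hq) u_pos).le
  calc Real.exp (-(C ^ 2 / (p * (1 - p)))) / Real.exp 1 ^ 2 / √u
      = Real.exp (-(C ^ 2 / (p * (1 - p)))) / (Real.exp 1 ^ 2 * √u) := div_div _ _ _
    _ ≤ Real.exp (-((r - p * u) ^ 2 / (p * (1 - p) * u))) / (Real.exp 1 ^ 2 * √u) := by gcongr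
    _ ≤ _ := exp_neg_div_le_choose_mul_pow_mul_pow hp0 hp1 (Nat.one_le_iff_ne_zero.mp hu) hr
end
end

section
/- Let n ≥ 1, k ≥ 1, let y ∈ ℤ^k, and let g = gcd(y_1, y_2, …, y_k, n). If l_1,…,l_k are independent random elements, each uniformly distributed on ZMod n, then the random element f_l(y) = Σ_{i=1}^k y_i · l_i of ZMod n is uniformly distributed on the subgroup {x ∈ ZMod n : x is an integer multiple of g}: each of the n/g elements of this subgroup is attained with probability g/n, and all other elements with probability 0. -/
/-!
The map `l ↦ ∑ i, y i * l i` is additive, so all its nonempty fibres have the same cardinality and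
it pushes the uniform distribution forward to the uniform distribution on its range. That range is
the ideal of `ZMod n` generated by the `y i`. By Bézout in `ℤ`, this ideal is generated by the gcd
of the `y i`, equivalently by the gcd `g` of the `y i` and `n`, and so it has `n / g` elements.
-/

open scoped BigOperators

noncomputable section

attribute [local instance 10] Classical.propDecidable

section Fiber

open Finset

variable {G M F : Type*} [AddGroup G] [Fintype G] [AddMonoid M] [DecidableEq M] [FunLike F G M]
  [AddMonoidHomClass F G M]

lemma card_fiber_mul_card_range (f : F) {z : M} (hz : z ∈ Set.range f) :
    #{x | f x = z} * Nat.card (Set.range f) = Fintype.card G := by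
  have fibers_equicard : ∀ w ∈ univ.image f, #{x | f x = w} = #{x | f x = z} := fun w hw ↦
    AddMonoidHom.card_fiber_eq_of_mem_range f (by simpa using hw) hz
  calc #{x | f x = z} * Nat.card (Set.range f)
      = #(univ.image f) * #{x | f x = z} := by
        rw [Nat.card_coe_set_eq, Set.ncard_eq_toFinset_card', Set.toFinset_range, mul_comm]
    _ = ∑ w ∈ univ.image f, #{x | f x = w} := (sum_const_nat fibers_equicard).symm
    _ = Fintype.card G := (card_eq_sum_card_image f univ).symm

lemma dens_fiber (f : F) (z : M) [Decidable (z ∈ Set.range f)] :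
    dens {x | f x = z} = if z ∈ Set.range f then (Nat.card (Set.range f) : ℚ≥0)⁻¹ else 0 := by
  split_ifs with hz
  · have : Nonempty (Set.range f) := ⟨z, hz⟩
    have card_range_ne_zero : (Nat.card (Set.range f) : ℚ≥0) ≠ 0 :=
      Nat.cast_ne_zero.mpr Nat.card_pos.ne'
    have card_ne_zero : (Fintype.card G : ℚ≥0) ≠ 0 := Nat.cast_ne_zero.mpr Fintype.card_ne_zero
    rw [dens_eq_card_div_card, div_eq_iff card_ne_zero, eq_inv_mul_iff_mul_eq₀ card_range_ne_zero,
      mul_comm]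
    exact_mod_cast card_fiber_mul_card_range f hz
  · rw [dens_eq_zero, filter_eq_empty_iff]
    exact fun x _ hx ↦ hz ⟨x, hx⟩

end Fiber

section LinearCombination

open Finset

variable {ι : Type*} [Fintype ι] [DecidableEq ι]

lemma dens_sum_smul_eq {R M : Type*} [Ring R] [Fintype R] [AddCommMonoid M] [Module R M]
    [DecidableEq M] (v : ι → M) (z : M)
    [Decidable (z ∈ Submodule.span R (Set.range v))] :
    dens {l : ι → R | ∑ i, l i • v i = z} =
      if z ∈ Submodule.span R (Set.range v)
      then (Nat.card (Submodule.span R (Set.range v)) : ℚ≥0)⁻¹ else 0 := by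
  have span_eq_range :
      (Submodule.span R (Set.range v) : Set M) = Set.range (Fintype.linearCombination R v) := by
    rw [← Fintype.range_linearCombination, LinearMap.coe_range]
  simp only [← SetLike.mem_coe, span_eq_range]
  exact dens_fiber (Fintype.linearCombination R v) z

lemma dens_sum_mul_eq {R : Type*} [CommRing R] [Fintype R] [DecidableEq R] (v : ι → R) (z : R)
    [Decidable (z ∈ Ideal.span (Set.range v))] :
    dens {l : ι → R | ∑ i, v i * l i = z} =
      if z ∈ Ideal.span (Set.range v)
      then (Nat.card (Ideal.span (Set.range v)) : ℚ≥0)⁻¹ else 0 := by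
  simp only [mul_comm (v _)]
  exact dens_sum_smul_eq v z

end LinearCombination

section Bezout

lemma span_image_eq_span_gcd {ι R : Type*} [CommRing R] [IsBezout R] [NormalizedGCDMonoid R]
    (s : Finset ι) (f : ι → R) : Ideal.span (f '' s) = Ideal.span {s.gcd f} := by
  apply le_antisymm
  · rw [Ideal.span_le]
    rintro _ ⟨i, hi, rfl⟩
    exact Ideal.mem_span_singleton.mpr (Finset.gcd_dvd hi)
  · obtain ⟨c, hc⟩ := s.gcd_eq_sum_mul f
    rw [Ideal.span_singleton_le_iff_mem, hc]
    exact sum_mem fun i hi ↦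
      Ideal.mul_mem_right _ _ (Ideal.subset_span (Set.mem_image_of_mem f hi))

lemma natCast_gcd_natAbs {ι : Type*} (s : Finset ι) (f : ι → ℤ) :
    ((s.gcd fun i ↦ (f i).natAbs : ℕ) : ℤ) = s.gcd f := by
  induction s using Finset.cons_induction with
  | empty => simp
  | cons i s hi ih =>
    rw [Finset.gcd_cons, Finset.gcd_cons, ← ih, ← Int.coe_gcd]
    simp [Int.gcd_eq_natAbs, gcd_eq_nat_gcd]

lemma span_natCast_gcd_char {R : Type*} [CommRing R] (n : ℕ) [CharP R n] (m : ℕ) :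
    Ideal.span {((n.gcd m : ℕ) : R)} = Ideal.span {(m : R)} := by
  apply le_antisymm <;> rw [Ideal.span_singleton_le_span_singleton]
  · exact ⟨m.gcdA n, by rw [CharP.intCast_mul_natCast_gcdA_eq_gcd, Nat.gcd_comm]⟩
  · exact Nat.cast_dvd_cast (n.gcd_dvd_right m)

lemma span_range_intCast_eq_span_gcd {ι R : Type*} [Fintype ι] [CommRing R] (n : ℕ) [CharP R n]
    (y : ι → ℤ) :
    Ideal.span (Set.range fun i ↦ (y i : R)) =
      Ideal.span {((n.gcd (Finset.univ.gcd fun i ↦ (y i).natAbs) : ℕ) : R)} := by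
  rw [span_natCast_gcd_char]
  calc Ideal.span (Set.range fun i ↦ (y i : R))
      = (Ideal.span (y '' (Finset.univ : Finset ι))).map (Int.castRingHom R) := by
        rw [Ideal.map_span, Finset.coe_univ, Set.image_univ, ← Set.range_comp]
        rfl
    _ = Ideal.span {((Finset.univ.gcd y : ℤ) : R)} := by
        rw [span_image_eq_span_gcd, Ideal.map_span, Set.image_singleton, eq_intCast]
    _ = Ideal.span {((Finset.univ.gcd fun i ↦ (y i).natAbs : ℕ) : R)} := by
        rw [← natCast_gcd_natAbs, Int.cast_natCast]

end Bezout

section IdealsOfZMod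

lemma zmod_mem_span_singleton {n : ℕ} {a z : ZMod n} :
    z ∈ Ideal.span {a} ↔ ∃ x : ℤ, z = (x : ZMod n) * a := by
  rw [Ideal.mem_span_singleton', ZMod.intCast_surjective.exists]
  simp only [eq_comm]

lemma card_zmod_span_natCast (n m : ℕ) [NeZero n] :
    Nat.card (Ideal.span {(m : ZMod n)}) = n / n.gcd m := by
  have span_eq_zmultiples :
      (Ideal.span {(m : ZMod n)} : Set (ZMod n)) = AddSubgroup.zmultiples (m : ZMod n) := by
    ext z
    simp [zmod_mem_span_singleton, AddSubgroup.mem_zmultiples_iff, eq_comm]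
  calc Nat.card (Ideal.span {(m : ZMod n)})
      = Nat.card (AddSubgroup.zmultiples (m : ZMod n)) :=
        Nat.card_congr (Equiv.setCongr span_eq_zmultiples)
    _ = n / n.gcd m := by
        rw [Nat.card_zmultiples, ZMod.addOrderOf_coe _ (NeZero.ne n)]

end IdealsOfZMod

/-- for general `n ≥ 1` and `y ∈ ℤ^k`, with `g = gcd(y₁,…,y_k,n)`,
if `l₁,…,l_k` are independent uniform elements of `ZMod n` (modelled as a uniform element
of the product space), then `f_l(y) = Σ y_i l_i` is uniform on the subgroup of integer
multiples of `g`: each such element has probability `g/n`, all others probability `0`. -/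
theorem fl_uniform_on_subgroup (n : ℕ) [NeZero n] (hn : 1 ≤ n) (k : ℕ) (hk : 1 ≤ k)
    (y : Fin k → ℤ) :
    ∀ z : ZMod n,
      ((Finset.univ.filter (fun l : Fin k → ZMod n =>
          ∑ i, (y i : ZMod n) * l i = z)).card : ℝ) /
        (Fintype.card (Fin k → ZMod n) : ℝ) =
      if ∃ x : ℤ,
          z = (x : ZMod n) * ((Nat.gcd n (Finset.univ.gcd fun i => (y i).natAbs) : ℕ) : ZMod n)
      then ((Nat.gcd n (Finset.univ.gcd fun i => (y i).natAbs) : ℝ)) / (n : ℝ)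
      else 0 := by
  intro z
  have g_dvd_n := n.gcd_dvd_left (Finset.univ.gcd fun i ↦ (y i).natAbs)
  rw [← Finset.nnratCast_dens, dens_sum_mul_eq]
  simp only [span_range_intCast_eq_span_gcd n, card_zmod_span_natCast,
    Nat.gcd_eq_right g_dvd_n]
  simp only [zmod_mem_span_singleton]
  split_ifs
  · rw [NNRat.cast_inv, NNRat.cast_natCast, Nat.cast_div_charZero g_dvd_n, inv_div]
  · exact NNRat.cast_zero
end
end

section
/- Let n be a prime, k ≥ 1, and let m, r be natural numbers with 1 ≤ m < n. Let Y'_m = {y ∈ ℤ^k : |y_i| ≤ m for all i}. If l_1,…,l_k are independent uniform random elements of ZMod n, then the probability that there exists y ∈ Y'_m \ {0} with d(f_l(y), 0) ≤ r is at most ((2m+1)^k − 1) · (2r+1) / n. -/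
/-!
If some coefficient of a linear form over a finite ring is a unit, the form is a surjective
homomorphism, so its value at a uniform point is uniform. A nonzero integer vector `y` with
`|y i| ≤ m` has a unit coordinate modulo `n` as soon as `m` is smaller than the least prime factor
of `n`. Hence for each such `y` the value `f_l(y)` is uniform on `ZMod n` and falls into a given
ball of radius `r` with probability at most `(2r+1)/n`; the union bound over the `(2m+1)^k - 1`
vectors `y` finishes the proof.
-/

open scoped BigOperators

noncomputable section

attribute [local instance 10] Classical.propDecidable

/-- Cycle distance on `ZMod n`: `min(ρ, n - ρ)` where `ρ` is the representative of `y - x`. -/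
def cycleDist (n : ℕ) [NeZero n] (x y : ZMod n) : ℕ :=
  min (y - x).val (n - (y - x).val)

open Finset

section Equidistribution

variable {G M : Type*} [AddGroup G] [Fintype G] [AddMonoid M] [DecidableEq M]

lemma card_filter_hom_mem (f : G →+ M) (hf : Function.Surjective f) (S : Finset M) :
    #{g | f g ∈ S} = #S * #{g | f g = 0} := by
  have hmaps : Set.MapsTo f ({g | f g ∈ S} : Finset G) S := fun g hg ↦ by simpa using hg
  rw [card_eq_sum_card_fiberwise hmaps, ← smul_eq_mul, ← sum_const]
  refine sum_congr rfl fun x hx ↦ ?_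
  rw [← AddMonoidHom.card_fiber_eq_of_mem_range f (hf x) (hf 0), filter_filter]
  exact congrArg card (filter_congr fun g _ ↦ and_iff_right_of_imp fun hg ↦ hg ▸ hx)

lemma dens_filter_hom_mem [Fintype M] (f : G →+ M) (hf : Function.Surjective f) (S : Finset M) :
    ({g | f g ∈ S} : Finset G).dens = S.dens := by
  have hcard : Fintype.card G = Fintype.card M * #{g | f g = 0} := by
    simpa using card_filter_hom_mem f hf univ
  have hker : (#{g | f g = 0} : ℚ≥0) ≠ 0 :=
    Nat.cast_ne_zero.2 (card_ne_zero_of_mem (mem_filter.2 ⟨mem_univ 0, map_zero f⟩))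
  rw [dens, dens, card_filter_hom_mem f hf, hcard, Nat.cast_mul, Nat.cast_mul,
    mul_div_mul_right _ _ hker]

variable {ι R : Type*} [Fintype ι] [Ring R]

lemma surjective_sum_mul_of_isUnit {a : ι → R} {j : ι} (ha : IsUnit (a j)) :
    Function.Surjective fun l : ι → R ↦ ∑ i, a i * l i := by
  classical
  exact fun x ↦ ⟨Pi.single j (ha.unit⁻¹ * x), by simp [Pi.single_apply, ← mul_assoc]⟩

lemma dens_filter_sum_mul_mem [DecidableEq ι] [Fintype R] [DecidableEq R] {a : ι → R} {j : ι}
    (ha : IsUnit (a j)) (S : Finset R) :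
    ({l | ∑ i, a i * l i ∈ S} : Finset (ι → R)).dens = S.dens :=
  dens_filter_hom_mem
    (AddMonoidHom.mk' (fun l : ι → R ↦ ∑ i, a i * l i) fun l l' ↦ by
      simp [mul_add, sum_add_distrib])
    (surjective_sum_mul_of_isUnit ha) S

end Equidistribution

section CycleDist

variable {n : ℕ} [NeZero n]

lemma cycleDist_eq_natAbs_valMinAbs (x y : ZMod n) :
    cycleDist n x y = (y - x).valMinAbs.natAbs :=
  (ZMod.valMinAbs_natAbs_eq_min (y - x)).symm

lemma card_filter_cycleDist_le (x : ZMod n) (r : ℕ) :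
    #{z | cycleDist n z x ≤ r} ≤ 2 * r + 1 := by
  have hIcc : #(Icc (-(r : ℤ)) r) = 2 * r + 1 := by
    rw [Int.card_Icc]
    omega
  rw [← hIcc]
  refine card_le_card_of_injOn (fun z ↦ (x - z).valMinAbs) (fun z hz ↦ ?_)
    (ZMod.injective_valMinAbs.comp sub_right_injective).injOn
  simp only [coe_filter, mem_univ, true_and, Set.mem_ofPred_eq,
    cycleDist_eq_natAbs_valMinAbs] at hz
  simp only [coe_Icc, Set.mem_Icc]
  omega

lemma dens_filter_cycleDist_le (x : ZMod n) (r : ℕ) :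
    ({z | cycleDist n z x ≤ r} : Finset (ZMod n)).dens ≤ (2 * r + 1) / n := by
  rw [dens, ZMod.card]
  gcongr
  exact mod_cast card_filter_cycleDist_le x r

end CycleDist

lemma isUnit_intCast_of_natAbs_lt_minFac {n : ℕ} {a : ℤ} (ha : a ≠ 0)
    (han : a.natAbs < n.minFac) : IsUnit (a : ZMod n) := by
  rw [ZMod.coe_int_isUnit_iff_isCoprime, Int.isCoprime_iff_nat_coprime]
  exact Nat.coprime_of_lt_minFac (Int.natAbs_ne_zero.2 ha) han

section IntegerBox

/-- The box `Y'_m` of integer vectors all of whose coordinates have absolute value at most `m`,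
over which the union bound is taken; the coordinates are indexed by an arbitrary finite type. -/
def integerBox (ι : Type*) [Fintype ι] [DecidableEq ι] (m : ℕ) : Finset (ι → ℤ) :=
  Fintype.piFinset fun _ ↦ Icc (-(m : ℤ)) m

variable {ι : Type*} [Fintype ι] [DecidableEq ι]

lemma mem_integerBox {m : ℕ} {y : ι → ℤ} : y ∈ integerBox ι m ↔ ∀ i, |y i| ≤ (m : ℤ) := by
  simp only [integerBox, Fintype.mem_piFinset, mem_Icc, abs_le]

lemma card_integerBox (m : ℕ) : #(integerBox ι m) = (2 * m + 1) ^ Fintype.card ι := by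
  rw [integerBox, Fintype.card_piFinset, prod_const, card_univ, Int.card_Icc]
  congr 1
  omega

lemma cast_card_integerBox_erase_zero {R : Type*} [Ring R] (m : ℕ) :
    (#((integerBox ι m).erase 0) : R) = (2 * m + 1) ^ Fintype.card ι - 1 := by
  rw [cast_card_erase_of_mem (mem_integerBox.2 (by simp)), card_integerBox]
  norm_cast

lemma exists_isUnit_intCast_of_mem_integerBox {n m : ℕ} (hm : m < n.minFac) {y : ι → ℤ}
    (hy : y ∈ integerBox ι m) (hy0 : y ≠ 0) : ∃ j, IsUnit (y j : ZMod n) := by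
  obtain ⟨j, hj⟩ := Function.ne_iff.1 hy0
  have hyj : (y j).natAbs ≤ m := by
    simpa only [Int.abs_eq_natAbs, Nat.cast_le] using mem_integerBox.1 hy j
  exact ⟨j, isUnit_intCast_of_natAbs_lt_minFac hj (hyj.trans_lt hm)⟩

end IntegerBox

lemma dens_filter_exists_cycleDist_le {ι : Type*} [Fintype ι] [DecidableEq ι] {n : ℕ} [NeZero n]
    {Y : Finset (ι → ℤ)} (hY : ∀ y ∈ Y, ∃ j, IsUnit (y j : ZMod n)) (x : ZMod n) (r : ℕ) :
    ({l | ∃ y ∈ Y, cycleDist n (∑ i, (y i : ZMod n) * l i) x ≤ r} :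
      Finset (ι → ZMod n)).dens ≤ #Y * ((2 * r + 1) / n) := by
  set ball : Finset (ZMod n) := {z | cycleDist n z x ≤ r} with hball
  have hunion : ({l | ∃ y ∈ Y, cycleDist n (∑ i, (y i : ZMod n) * l i) x ≤ r} :
      Finset (ι → ZMod n)) = Y.biUnion fun y ↦ {l | ∑ i, (y i : ZMod n) * l i ∈ ball} := by
    ext l
    simp [hball]
  calc
    _ ≤ ∑ y ∈ Y, ({l | ∑ i, (y i : ZMod n) * l i ∈ ball} : Finset (ι → ZMod n)).dens :=
      hunion ▸ dens_biUnion_le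
    _ = ∑ _y ∈ Y, ball.dens := sum_congr rfl fun y hy ↦ by
      obtain ⟨j, hj⟩ := hY y hy
      exact dens_filter_sum_mul_mem (a := fun i ↦ (y i : ZMod n)) hj ball
    _ = #Y * ball.dens := by rw [sum_const, nsmul_eq_mul]
    _ ≤ #Y * ((2 * r + 1) / n) := by
      gcongr
      exact dens_filter_cycleDist_le x r

theorem union_bound_near_zero_general {ι : Type*} [Fintype ι] [DecidableEq ι] (n : ℕ) [NeZero n]
    (m r : ℕ) (hm : m < n.minFac) (x : ZMod n) :
    ((Finset.univ.filter (fun l : ι → ZMod n =>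
        ∃ y : ι → ℤ, y ≠ 0 ∧ (∀ i, |y i| ≤ (m : ℤ)) ∧
          cycleDist n (∑ i, (y i : ZMod n) * l i) x ≤ r)).card : ℝ) /
      (Fintype.card (ι → ZMod n) : ℝ)
      ≤ ((2 * (m : ℝ) + 1) ^ Fintype.card ι - 1) * (2 * (r : ℝ) + 1) / (n : ℝ) := by
  have hunit : ∀ y ∈ (integerBox ι m).erase 0, ∃ j, IsUnit (y j : ZMod n) := fun y hy ↦
    exists_isUnit_intCast_of_mem_integerBox hm (mem_of_mem_erase hy) (ne_of_mem_erase hy)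
  have hbound := NNRat.cast_mono (K := ℝ) (dens_filter_exists_cycleDist_le hunit x r)
  push_cast [cast_card_integerBox_erase_zero] at hbound
  simpa only [mem_erase, mem_integerBox, and_assoc, mul_div_assoc] using hbound

/-- for prime `n`, `1 ≤ m < n` and `r : ℕ`, the probability over independent
uniform `l₁,…,l_k` (modelled as a uniform element of the product space) that some nonzero
`y` with `|y_i| ≤ m` has `d(f_l(y), 0) ≤ r` is at most `((2m+1)^k - 1)(2r+1)/n`. -/
theorem union_bound_near_zero (k : ℕ) (hk : 1 ≤ k) (n : ℕ) [NeZero n] (hn : n.Prime)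
    (m r : ℕ) (hm1 : 1 ≤ m) (hmn : m < n) :
    ((Finset.univ.filter (fun l : Fin k → ZMod n =>
        ∃ y : Fin k → ℤ, y ≠ 0 ∧ (∀ i, |y i| ≤ (m : ℤ)) ∧
          cycleDist n (∑ i, (y i : ZMod n) * l i) 0 ≤ r)).card : ℝ) /
      (Fintype.card (Fin k → ZMod n) : ℝ)
      ≤ ((2 * (m : ℝ) + 1) ^ k - 1) * (2 * (r : ℝ) + 1) / (n : ℝ) := by
  simpa only [Fintype.card_fin] using
    union_bound_near_zero_general (ι := Fin k) n m r (hmn.trans_eq hn.minFac_eq.symm) 0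
end
end

section
/- For every δ₁ with 0 < δ₁ < 1 there exist α₁ > 0 and N ∈ ℕ such that for every n ≥ N, with probability at least 1 − δ₁ over the random l: for every sign pattern b ∈ {−1,1}^k and every pair of distinct points y, y' ∈ Y_m^b, the cycle distance satisfies d(f_l(y), f_l(y')) > α₁ · s. -/
/-!
The points `y`, `y'` lie in a common orthant, so `z = y' - y` is one of at most `(2m)^k` nonzero
vectors with entries in `(-m, m)`, and their distance is the size of `f_l(z)`.

For a fixed `z` the map `l ↦ f_l(z)` is a homomorphism, hence uniform on its range, a subgroup `H`
of `ZMod n`. An integer maps into `H` exactly when the index `e` of `H` divides it. Consequently at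
most `2T / e + 1` elements of `H` lie within distance `T` of `0`, which gives `f_l(z)` probability
at most `(2T + e) / n` of doing so; and `e` divides every entry of `z`, so `e ≤ m`.

Summing over `z` with `T = α s` bounds the failure probability by
`(2m)^k (2 α s + m) / n = 2^(k+1) α + 2^k m^(k+1) / n`, where `m^(k+1) = O(n^(1/2))`.
-/

open scoped BigOperators

noncomputable section

attribute [local instance 10] Classical.propDecidable

/-- `f_l(y) = Σ yᵢ lᵢ` in `ZMod n`. -/
def fl {n k : ℕ} [NeZero n] (l : Fin k → ZMod n) (y : Fin k → ℤ) : ZMod n :=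
  ∑ i, (y i : ZMod n) * l i

/-- Probability of `E` when `l₁,…,l_k` are independent uniform elements of `ZMod n`,
modelled as a uniform element of the product space. -/
def lProb (n k : ℕ) [NeZero n] (E : (Fin k → ZMod n) → Prop) : ℝ :=
  ((Finset.univ.filter E).card : ℝ) / (Fintype.card (Fin k → ZMod n) : ℝ)

/-- `b` is a sign pattern in `{-1,1}^k`. -/
def IsSign {k : ℕ} (b : Fin k → ℤ) : Prop := ∀ i, b i = 1 ∨ b i = -1

/-- Membership in `Y_m^b = {y ∈ ℤ^k : 0 ≤ bᵢ yᵢ < m}`. -/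
def inYmb {k : ℕ} (b : Fin k → ℤ) (m : ℕ) (y : Fin k → ℤ) : Prop :=
  ∀ i, 0 ≤ b i * y i ∧ b i * y i < (m : ℤ)

/-- `m = m(n) = ⌈c n^{1/(2k+2)}⌉`. -/
def mOf (k : ℕ) (c : ℝ) (n : ℕ) : ℕ := ⌈c * (n : ℝ) ^ ((1 : ℝ) / (2 * (k : ℝ) + 2))⌉₊

/-- The standard distance `s = s(n) = n / m^k`. -/
def sOf (k : ℕ) (c : ℝ) (n : ℕ) : ℝ := (n : ℝ) / (mOf k c n : ℝ) ^ k

section Homomorphisms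

open Finset

theorem intCast_mem_iff_index_dvd {n : ℕ} (H : AddSubgroup (ZMod n)) (a : ℤ) :
    (a : ZMod n) ∈ H ↔ (H.index : ℤ) ∣ a := by
  obtain ⟨g, hg⟩ := Int.subgroup_cyclic (H.comap (Int.castAddHom (ZMod n)))
  rw [← AddSubgroup.zmultiples_eq_closure] at hg
  have hindex : H.index = g.natAbs := by
    rw [← H.index_comap_of_surjective (f := Int.castAddHom (ZMod n)) ZMod.intCast_surjective, hg,
      Int.index_zmultiples]
  rw [hindex, Int.natAbs_dvd, ← Int.mem_zmultiples_iff, ← hg, AddSubgroup.mem_comap,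
    Int.coe_castAddHom]

theorem index_mul_card_filter_natAbs_valMinAbs_le {n : ℕ} [NeZero n] (H : AddSubgroup (ZMod n))
    [DecidablePred (· ∈ H)] (T : ℕ) :
    H.index * #{v | v ∈ H ∧ v.valMinAbs.natAbs ≤ T} ≤ 2 * T + H.index := by
  set e := H.index
  have he : 0 < e := Nat.pos_of_ne_zero H.index_ne_zero_of_finite
  have hcard : #{v | v ∈ H ∧ v.valMinAbs.natAbs ≤ T} ≤ #(Icc (-(T / e : ℕ) : ℤ) (T / e : ℕ)) := by
    refine card_le_card_of_surjOn (fun q => ((e * q : ℤ) : ZMod n)) fun v hv => ?_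
    obtain ⟨hvH, hvT⟩ : v ∈ H ∧ v.valMinAbs.natAbs ≤ T := by simpa using hv
    rw [← v.coe_valMinAbs, intCast_mem_iff_index_dvd] at hvH
    obtain ⟨q, hq⟩ := hvH
    have hqT : q.natAbs ≤ T / e := by
      rwa [Nat.le_div_iff_mul_le he, mul_comm, ← Int.natAbs_natCast e, ← Int.natAbs_mul, ← hq]
    refine ⟨q, ?_, by simp only [e, ← hq, ZMod.coe_valMinAbs]⟩
    rw [coe_Icc, Set.mem_Icc]
    omega
  calc e * #{v | v ∈ H ∧ v.valMinAbs.natAbs ≤ T} ≤ e * (2 * (T / e) + 1) := by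
        refine Nat.mul_le_mul_left e (hcard.trans_eq ?_)
        rw [Int.card_Icc]
        omega
    _ = 2 * (e * (T / e)) + e := by ring
    _ ≤ 2 * T + e := by gcongr; exact Nat.mul_div_le T e

theorem card_filter_comp_addMonoidHom {G M : Type*} [AddGroup G] [Fintype G] [AddGroup M]
    [Fintype M] (φ : G →+ M) [DecidablePred (· ∈ φ.range)] (p : M → Prop) [DecidablePred p] :
    #{x | p (φ x)} = Nat.card φ.ker * #{v | v ∈ φ.range ∧ p v} := by
  have hfiber : ∀ v ∈ ({v | v ∈ φ.range ∧ p v} : Finset M),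
      #{x ∈ {x | p (φ x)} | φ x = v} = Nat.card φ.ker := by
    intro v hv
    obtain ⟨hvφ, hpv⟩ : v ∈ φ.range ∧ p v := by simpa using hv
    calc #{x ∈ {x | p (φ x)} | φ x = v} = #{x | φ x = v} := by
          rw [filter_filter]
          congr! 3 with x
          exact and_iff_right_of_imp fun hx => hx ▸ hpv
      _ = #{x | φ x = 0} :=
          AddMonoidHom.card_fiber_eq_of_mem_range φ hvφ ⟨0, map_zero φ⟩
      _ = Nat.card φ.ker := by
          rw [← Fintype.card_subtype, ← Nat.card_eq_fintype_card]
          rfl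
  have hmaps : Set.MapsTo φ ({x | p (φ x)} : Finset G) ({v | v ∈ φ.range ∧ p v} : Finset M) :=
    fun x hx => by simpa using hx
  rw [card_eq_sum_card_fiberwise hmaps, sum_const_nat hfiber, mul_comm]

theorem mul_card_filter_natAbs_valMinAbs_le {n : ℕ} [NeZero n] {G : Type*} [AddGroup G]
    [Fintype G] (φ : G →+ ZMod n) (T : ℕ) :
    n * #{x | (φ x).valMinAbs.natAbs ≤ T} ≤ Fintype.card G * (2 * T + φ.range.index) := by
  have hn : n = Nat.card φ.range * φ.range.index := by
    rw [AddSubgroup.card_mul_index, Nat.card_zmod]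
  have hG : Fintype.card G = Nat.card φ.ker * Nat.card φ.range := by
    rw [← AddSubgroup.index_ker, AddSubgroup.card_mul_index, Nat.card_eq_fintype_card]
  calc n * #{x | (φ x).valMinAbs.natAbs ≤ T}
      = Nat.card φ.range * φ.range.index *
          (Nat.card φ.ker * #{v | v ∈ φ.range ∧ v.valMinAbs.natAbs ≤ T}) := by
        rw [← hn, ← card_filter_comp_addMonoidHom φ fun v => v.valMinAbs.natAbs ≤ T]
    _ = Fintype.card G * (φ.range.index * #{v | v ∈ φ.range ∧ v.valMinAbs.natAbs ≤ T}) := by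
        rw [hG]
        ring
    _ ≤ Fintype.card G * (2 * T + φ.range.index) := by
        gcongr
        exact index_mul_card_filter_natAbs_valMinAbs_le φ.range T

end Homomorphisms

section Probability

variable {n k : ℕ} [NeZero n]

theorem lProb_mono {E F : (Fin k → ZMod n) → Prop} (h : ∀ l, E l → F l) :
    lProb n k E ≤ lProb n k F := by
  unfold lProb
  gcongr with l
  exact h l

theorem lProb_not (E : (Fin k → ZMod n) → Prop) :
    lProb n k (fun l => ¬ E l) = 1 - lProb n k E := by
  have hcard : (Fintype.card (Fin k → ZMod n) : ℝ) ≠ 0 := Nat.cast_ne_zero.mpr Fintype.card_ne_zero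
  rw [eq_sub_iff_add_eq', lProb, lProb, ← add_div, div_eq_one_iff_eq hcard, ← Nat.cast_add,
    Finset.card_filter_add_card_filter_not, Finset.card_univ]

theorem lProb_exists_mem_le_sum {ι : Type*} (s : Finset ι) (E : ι → (Fin k → ZMod n) → Prop) :
    lProb n k (fun l => ∃ i ∈ s, E i l) ≤ ∑ i ∈ s, lProb n k (E i) := by
  simp only [lProb, ← Finset.sum_div]
  gcongr
  rw [← Nat.cast_sum, Nat.cast_le]
  refine (Finset.card_le_card fun l hl => ?_).trans Finset.card_biUnion_le
  simpa using hl

end Probability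

section LinearForms

variable {n k : ℕ} [NeZero n]

/-- The map `l ↦ f_l(z)` for a fixed integer vector `z`, as a group homomorphism: the distribution
of `f_l(z)` is read off from its range. -/
def flHom (n : ℕ) [NeZero n] (z : Fin k → ℤ) : (Fin k → ZMod n) →+ ZMod n where
  toFun l := fl l z
  map_zero' := by simp [fl]
  map_add' l l' := by simp [fl, mul_add, Finset.sum_add_distrib]

theorem index_range_flHom_dvd (z : Fin k → ℤ) (i : Fin k) :
    ((flHom n z).range.index : ℤ) ∣ z i := by
  rw [← intCast_mem_iff_index_dvd]
  exact ⟨Pi.single i 1, by simp [flHom, fl, Pi.single_apply]⟩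

theorem cycleDist_fl (l : Fin k → ZMod n) (y y' : Fin k → ℤ) :
    cycleDist n (fl l y) (fl l y') = (fl l (y' - y)).valMinAbs.natAbs := by
  have hsub : fl l y' - fl l y = fl l (y' - y) := by
    simp [fl, sub_mul, Finset.sum_sub_distrib]
  rw [ZMod.valMinAbs_natAbs_eq_min, cycleDist, hsub]

theorem lProb_natAbs_valMinAbs_fl_le (z : Fin k → ℤ) {i : Fin k} (hi : z i ≠ 0) (T : ℕ) :
    lProb n k (fun l => (fl l z).valMinAbs.natAbs ≤ T) ≤ (2 * T + |z i|) / n := by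
  have hindex : ((flHom n z).range.index : ℝ) ≤ |z i| := by
    exact_mod_cast Int.le_of_dvd (abs_pos.mpr hi) ((dvd_abs _ _).mpr (index_range_flHom_dvd z i))
  have hcard := mul_card_filter_natAbs_valMinAbs_le (flHom n z) T
  have hn : (0 : ℝ) < n := Nat.cast_pos.mpr (NeZero.pos n)
  have hG : (0 : ℝ) < Fintype.card (Fin k → ZMod n) := Nat.cast_pos.mpr Fintype.card_pos
  calc lProb n k (fun l => (fl l z).valMinAbs.natAbs ≤ T)
      ≤ (2 * T + (flHom n z).range.index) / n := by
        rw [lProb, div_le_div_iff₀ hG hn, mul_comm, mul_comm (_ + _)]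
        convert (Nat.cast_le (α := ℝ)).mpr hcard using 1 <;> push_cast
        · congr!
        · rfl
    _ ≤ (2 * T + |z i|) / n := by gcongr

end LinearForms

section Differences

variable {n k : ℕ} [NeZero n]

/-- The nonzero integer vectors with all coordinates in `(-m, m)`: every difference of two distinct
points of a common `Y_m^b` is one of them. -/
def boxDifferences (k m : ℕ) : Finset (Fin k → ℤ) :=
  (Fintype.piFinset fun _ => Finset.Ioo (-(m : ℤ)) m).erase 0

theorem card_boxDifferences_le (k m : ℕ) : (boxDifferences k m).card ≤ (2 * m) ^ k := by
  refine Finset.card_erase_le.trans ?_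
  rw [Fintype.card_piFinset_const, Int.card_Ioo]
  exact Nat.pow_le_pow_left (by omega) k

theorem sub_mem_boxDifferences {m : ℕ} {b y y' : Fin k → ℤ} (hb : IsSign b) (hy : inYmb b m y)
    (hy' : inYmb b m y') (hne : y ≠ y') : y' - y ∈ boxDifferences k m := by
  refine Finset.mem_erase.mpr ⟨sub_ne_zero.mpr hne.symm, Fintype.mem_piFinset.mpr fun i => ?_⟩
  have hyi := hy i
  have hyi' := hy' i
  rw [Finset.mem_Ioo, Pi.sub_apply]
  rcases hb i with h | h <;> rw [h] at hyi hyi' <;> omega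

theorem lProb_natAbs_valMinAbs_fl_le_of_mem_boxDifferences {m : ℕ} {z : Fin k → ℤ}
    (hz : z ∈ boxDifferences k m) (T : ℕ) :
    lProb n k (fun l => (fl l z).valMinAbs.natAbs ≤ T) ≤ (2 * T + m) / n := by
  obtain ⟨hz0, hzm⟩ := Finset.mem_erase.mp hz
  obtain ⟨i, hi⟩ := Function.ne_iff.mp hz0
  have hzi : (|z i| : ℝ) ≤ m := by
    exact_mod_cast (abs_lt.mpr (Finset.mem_Ioo.mp (Fintype.mem_piFinset.mp hzm i))).le
  refine (lProb_natAbs_valMinAbs_fl_le z hi T).trans ?_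
  push_cast
  gcongr

theorem lProb_exists_mem_boxDifferences_le (m T : ℕ) :
    lProb n k (fun l => ∃ z ∈ boxDifferences k m, (fl l z).valMinAbs.natAbs ≤ T)
      ≤ (2 * m) ^ k * ((2 * T + m) / n) := by
  calc lProb n k (fun l => ∃ z ∈ boxDifferences k m, (fl l z).valMinAbs.natAbs ≤ T)
      ≤ ∑ z ∈ boxDifferences k m, lProb n k (fun l => (fl l z).valMinAbs.natAbs ≤ T) :=
        lProb_exists_mem_le_sum _ _
    _ ≤ (boxDifferences k m).card • ((2 * T + m) / n : ℝ) :=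
        Finset.sum_le_card_nsmul _ _ _ fun _ hz =>
          lProb_natAbs_valMinAbs_fl_le_of_mem_boxDifferences hz T
    _ ≤ (2 * m) ^ k * ((2 * T + m) / n) := by
        rw [nsmul_eq_mul]
        gcongr
        exact_mod_cast card_boxDifferences_le k m

theorem one_sub_le_lProb_forall_lt_cycleDist (m : ℕ) {t : ℝ} (ht : 0 ≤ t) :
    1 - (2 * m) ^ k * ((2 * t + m) / n) ≤ lProb n k (fun l =>
      ∀ b : Fin k → ℤ, IsSign b → ∀ y y' : Fin k → ℤ, inYmb b m y → inYmb b m y' → y ≠ y' →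
        t < (cycleDist n (fl l y) (fl l y') : ℝ)) := by
  calc (1 - (2 * m) ^ k * ((2 * t + m) / n) : ℝ)
      ≤ 1 - (2 * m) ^ k * ((2 * ⌊t⌋₊ + m) / n) := by gcongr; exact Nat.floor_le ht
    _ ≤ lProb n k (fun l =>
          ¬ ∃ z ∈ boxDifferences k m, (fl l z).valMinAbs.natAbs ≤ ⌊t⌋₊) := by
        rw [lProb_not]
        gcongr
        exact lProb_exists_mem_boxDifferences_le m ⌊t⌋₊
    _ ≤ _ := lProb_mono fun l hl b hb y y' hy hy' hne => by
        push Not at hl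
        rw [cycleDist_fl, ← Nat.floor_lt ht]
        exact hl _ (sub_mem_boxDifferences hb hy hy' hne)

end Differences

section Asymptotics

open Filter Topology

theorem tendsto_mOf_pow_div_atTop (k : ℕ) {c : ℝ} (hc : 0 ≤ c) :
    Tendsto (fun n : ℕ => (mOf k c n : ℝ) ^ (k + 1) / n) atTop (𝓝 0) := by
  set x : ℕ → ℝ := fun n => (n : ℝ) ^ ((1 : ℝ) / (2 * k + 2))
  have hx : Tendsto x atTop atTop :=
    (tendsto_rpow_atTop (by positivity)).comp tendsto_natCast_atTop_atTop
  have hmx : Tendsto (fun n => (mOf k c n : ℝ) / x n) atTop (𝓝 c) :=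
    (tendsto_nat_ceil_mul_div_atTop hc).comp hx
  have hx_inv : Tendsto (fun n => (x n ^ (k + 1))⁻¹) atTop (𝓝 0) :=
    ((tendsto_pow_atTop k.succ_ne_zero).comp hx).inv_tendsto_atTop
  have hx_sq (n : ℕ) : x n ^ (k + 1) * x n ^ (k + 1) = n := by
    rw [← pow_add, ← Real.rpow_natCast, ← Real.rpow_mul n.cast_nonneg]
    convert Real.rpow_one (n : ℝ) using 2
    push_cast
    field_simp
    ring
  have hlim := (hmx.pow (k + 1)).mul hx_inv
  rw [mul_zero] at hlim
  refine hlim.congr fun n => ?_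
  rw [div_pow, ← div_eq_mul_inv, div_div, hx_sq]

theorem pow_mOf_mul_sOf_le (k : ℕ) (c : ℝ) (n : ℕ) : (mOf k c n : ℝ) ^ k * sOf k c n ≤ n := by
  rw [sOf, mul_div_left_comm]
  exact mul_le_of_le_one_right n.cast_nonneg (div_self_le_one _)

theorem two_mul_mOf_pow_mul_div_le (k : ℕ) (c : ℝ) (n : ℕ) {α : ℝ} (hα : 0 ≤ α) :
    (2 * mOf k c n : ℝ) ^ k * ((2 * (α * sOf k c n) + mOf k c n) / n)
      ≤ 2 ^ (k + 1) * α + 2 ^ k * ((mOf k c n : ℝ) ^ (k + 1) / n) := by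
  calc (2 * mOf k c n : ℝ) ^ k * ((2 * (α * sOf k c n) + mOf k c n) / n)
      = 2 ^ (k + 1) * α * (mOf k c n ^ k * sOf k c n / n)
          + 2 ^ k * (mOf k c n ^ (k + 1) / n) := by
        rw [mul_pow]
        ring
    _ ≤ 2 ^ (k + 1) * α + 2 ^ k * (mOf k c n ^ (k + 1) / n) := by
        refine add_le_add_left (mul_le_of_le_one_right (by positivity) ?_) _
        exact div_le_one_of_le₀ (pow_mOf_mul_sOf_le k c n) n.cast_nonneg

end Asymptotics

/-- for every `0 < δ₁ < 1` there are `α₁ > 0` and `N` such that for all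
`n ≥ N`, with probability at least `1 - δ₁` over `l`: for every sign pattern `b` and all
distinct `y, y' ∈ Y_m^b`, `d(f_l(y), f_l(y')) > α₁ s`. -/
theorem mapped_points_not_too_close (k : ℕ) (hk : 1 ≤ k) (c : ℝ) (hc : 0 < c)
    (δ₁ : ℝ) (h0 : 0 < δ₁) (h1 : δ₁ < 1) :
    ∃ α₁ : ℝ, 0 < α₁ ∧ ∃ N : ℕ, ∀ (n : ℕ) [NeZero n], N ≤ n →
      1 - δ₁ ≤ lProb n k (fun l =>
        ∀ b : Fin k → ℤ, IsSign b →
          ∀ y y' : Fin k → ℤ, inYmb b (mOf k c n) y → inYmb b (mOf k c n) y' → y ≠ y' →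
            α₁ * sOf k c n < (cycleDist n (fl l y) (fl l y') : ℝ)) := by
  set α : ℝ := δ₁ / 2 / 2 ^ (k + 1)
  have hα : 0 < α := by positivity
  have hsmall : ∀ᶠ n : ℕ in Filter.atTop, 2 ^ k * ((mOf k c n : ℝ) ^ (k + 1) / n) < δ₁ / 2 :=
    ((tendsto_mOf_pow_div_atTop k hc.le).const_mul (2 ^ k)).eventually_lt_const
      (by rw [mul_zero]; positivity)
  obtain ⟨N, hN⟩ := Filter.eventually_atTop.mp hsmall
  refine ⟨α, hα, N, fun n _ hn => ?_⟩
  have hs : 0 ≤ sOf k c n := by unfold sOf; positivity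
  refine le_trans ?_ (one_sub_le_lProb_forall_lt_cycleDist (mOf k c n) (mul_nonneg hα.le hs))
  gcongr
  calc (2 * mOf k c n : ℝ) ^ k * ((2 * (α * sOf k c n) + mOf k c n) / n)
      ≤ 2 ^ (k + 1) * α + 2 ^ k * ((mOf k c n : ℝ) ^ (k + 1) / n) :=
        two_mul_mOf_pow_mul_div_le k c n hα.le
    _ ≤ δ₁ / 2 + δ₁ / 2 := by
        gcongr
        · exact (mul_div_cancel₀ _ (by positivity)).le
        · exact (hN n hn).le
    _ = δ₁ := add_halves δ₁
end
end

section
/- For every δ₂ with 0 < δ₂ < 1 there exist constants α₁ > 0, α₂ < ∞ and N ∈ ℕ such that for every n ≥ N, with probability at least 1 − δ₂ over the random l: for every sign pattern b ∈ {−1,1}^k there exists y ∈ Y_m^b with y ≠ 0 such that α₁ · s < d(f_l(y), 0) ≤ α₂ · s. -/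
/-!
For a nonzero `y` with `|y i| ≤ m`, resampling a single coordinate `l i` with `y i ≠ 0` shows that
`f_l(y)` lies in a given window of `W` consecutive residues with probability at most `(W + m) / n`,
whatever the arithmetic of `n`: the error term `m` accounts for `gcd (y i, n)`. It is negligible
because `m ^ (k + 1) = o(n)`.

A union bound over the `y` with `|y i| < m` shows that no nonzero such `y` is likely to bring
`f_l(y)` within `α₁ s` of zero. For the upper bound, put `M = ⌊m / 2⌋`, `w = ⌈α₂ s⌉` and let `B` be
the union of the windows `f_l(a) + [0, w)` over `a ∈ [0, M)^k`. The second moment of the number of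
representations of a residue shows that `B` probably contains more than half of the cycle. Then `B`
meets each of its translates, in particular, for every sign pattern `b` at once, the one by
`f_l(M b)`; this gives `a, a' ∈ [0, M)^k` such that `y = M b + a - a'` satisfies
`d(f_l(y), 0) < w`, and `0 < b i * y i < 2 M` for every `i`.
-/

open scoped BigOperators

noncomputable section

attribute [local instance 10] Classical.propDecidable

section

open Finset

variable {n k : ℕ} [NeZero n]

/-! ### Linear congruences -/

lemma card_intCast_mul_eq_le_gcd (q : ℤ) (v : ZMod n) :
    #{x : ZMod n | (q : ZMod n) * x = v} ≤ q.gcd n := by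
  obtain h | ⟨x₀, hx₀⟩ := eq_empty_or_nonempty {x : ZMod n | (q : ZMod n) * x = v}
  · simp [h]
  · have hg : 0 < q.gcd n := Int.gcd_pos_of_ne_zero_right _ (Nat.cast_ne_zero.2 (NeZero.ne n))
    refine le_trans ?_ (IsAddCyclic.card_nsmul_eq_zero_le (α := ZMod n) hg)
    refine card_le_card_of_injOn (· - x₀) (fun x hx => ?_) sub_left_injective.injOn
    simp only [coe_filter, mem_univ, true_and, Set.mem_ofPred_eq, mem_filter] at hx hx₀ ⊢
    refine gcd_nsmul_eq_zero.2 ⟨natAbs_nsmul_eq_zero.2 ?_, by simp⟩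
    rw [zsmul_eq_mul, mul_sub, hx, hx₀, sub_self]

lemma exists_modEq_gcd_of_intCast_mul_eq_add (q : ℤ) (r : ZMod n) :
    ∃ v : ℕ, ∀ (j : ℕ) (x : ZMod n), (q : ZMod n) * x = r + j → j ≡ v [MOD q.gcd n] := by
  have hg : q.gcd n ∣ n := Int.natCast_dvd_natCast.1 (Int.gcd_dvd_right _ _)
  have : NeZero (q.gcd n) := ⟨fun h => NeZero.ne n (zero_dvd_iff.1 (h ▸ hg))⟩
  let π := ZMod.castHom hg (ZMod (q.gcd n))
  refine ⟨(-π r).val, fun j x h => ?_⟩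
  have hq : (q : ZMod (q.gcd n)) = 0 :=
    (ZMod.intCast_zmod_eq_zero_iff_dvd _ _).2 (Int.gcd_dvd_left _ _)
  have hπ : 0 = π r + j := by simpa [hq] using congrArg π h
  rw [← ZMod.natCast_eq_natCast_iff, ZMod.natCast_zmod_val]
  exact eq_neg_of_add_eq_zero_right hπ.symm

lemma sum_card_intCast_mul_eq_add_le (q : ℤ) (r : ZMod n) (W : ℕ) :
    ∑ x : ZMod n, #{j ∈ range W | (q : ZMod n) * x = r + (j : ℕ)} ≤ W + q.gcd n := by
  obtain ⟨v, hv⟩ := exists_modEq_gcd_of_intCast_mul_eq_add q r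
  have hg : 0 < q.gcd n := Int.gcd_pos_of_ne_zero_right _ (Nat.cast_ne_zero.2 (NeZero.ne n))
  calc ∑ x : ZMod n, #{j ∈ range W | (q : ZMod n) * x = r + (j : ℕ)}
      = ∑ j ∈ range W, #{x : ZMod n | (q : ZMod n) * x = r + (j : ℕ)} :=
        sum_card_bipartiteAbove_eq_sum_card_bipartiteBelow _
    _ ≤ ∑ j ∈ range W, if j ≡ v [MOD q.gcd n] then q.gcd n else 0 := by
        refine sum_le_sum fun j _ => ?_
        split_ifs with h
        · exact card_intCast_mul_eq_le_gcd q _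
        · exact (card_eq_zero.2 (filter_eq_empty_iff.2 fun x _ hx => h (hv j x hx))).le
    _ = Nat.count (· ≡ v [MOD q.gcd n]) W * q.gcd n := by
        rw [Nat.count_eq_card_filter_range, ← sum_filter, sum_const, smul_eq_mul]
    _ ≤ (W / q.gcd n + 1) * q.gcd n := by
        rw [Nat.count_modEq_card _ hg]
        gcongr
        split_ifs <;> simp
    _ ≤ W + q.gcd n := by
        rw [add_mul, one_mul]
        gcongr
        exact Nat.div_mul_le_self W _

/-! ### Averages and probabilities -/

lemma expect_expect_add {G X : Type*} [AddGroup G] [Fintype G] [Fintype X] [Nonempty X]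
    (φ : X → G) (F : G → ℝ) : 𝔼 g, 𝔼 x, F (g + φ x) = 𝔼 g, F g := by
  rw [expect_comm]
  have hshift (x : X) : 𝔼 g, F (g + φ x) = 𝔼 g, F g :=
    Fintype.expect_equiv (Equiv.addRight (φ x)) _ _ fun _ => rfl
  simp only [hshift, Fintype.expect_const]

lemma lProb_eq_expect (E : (Fin k → ZMod n) → Prop) [DecidablePred E] :
    lProb n k E = 𝔼 l, if E l then (1 : ℝ) else 0 := by
  rw [Fintype.expect_eq_sum_div_card, sum_boole, lProb]
  congr!

lemma sum_lProb_eq_expect_card {ι : Type*} (I : Finset ι) (A : ι → (Fin k → ZMod n) → Prop)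
    [∀ i l, Decidable (A i l)] :
    ∑ i ∈ I, lProb n k (A i) = 𝔼 l, (#{i ∈ I | A i l} : ℝ) := by
  simp only [lProb_eq_expect, ← expect_sum_comm, sum_boole]

lemma lProb_le_sum_of_forall_exists {ι : Type*} (I : Finset ι) {E : (Fin k → ZMod n) → Prop}
    {A : ι → (Fin k → ZMod n) → Prop} (h : ∀ l, E l → ∃ i ∈ I, A i l) :
    lProb n k E ≤ ∑ i ∈ I, lProb n k (A i) := by
  rw [sum_lProb_eq_expect_card, lProb_eq_expect]
  refine expect_le_expect fun l _ => ?_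
  split_ifs with hl
  · obtain ⟨i, hi, hA⟩ := h l hl
    exact_mod_cast card_pos.2 ⟨i, mem_filter.2 ⟨hi, hA⟩⟩
  · positivity

lemma mul_lProb_add_le {ι : Type*} {I : Finset ι} {E : (Fin k → ZMod n) → Prop} [DecidablePred E]
    {A : ι → (Fin k → ZMod n) → Prop} [∀ i l, Decidable (A i l)] {a b C : ℝ}
    (h : ∀ l, a * (if E l then 1 else 0) + b ≤ C * #{i ∈ I | A i l}) :
    a * lProb n k E + b ≤ C * ∑ i ∈ I, lProb n k (A i) := by
  rw [sum_lProb_eq_expect_card, lProb_eq_expect, mul_expect, mul_expect,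
    ← Fintype.expect_const (ι := Fin k → ZMod n) b, ← expect_add_distrib]
  exact expect_le_expect fun l _ => by simpa only [Fintype.expect_const] using h l

lemma one_sub_add_le_lProb {E B₁ B₂ : (Fin k → ZMod n) → Prop}
    (h : ∀ l, ¬B₁ l → ¬B₂ l → E l) : 1 - (lProb n k B₁ + lProb n k B₂) ≤ lProb n k E := by
  rw [sub_le_iff_le_add, lProb_eq_expect, lProb_eq_expect, lProb_eq_expect, ← expect_add_distrib,
    ← expect_add_distrib]
  refine le_expect univ_nonempty fun l _ => ?_
  have hl := h l
  split_ifs <;> first | tauto | norm_num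

lemma card_sq_le_card_image_mul_card_eq {ι β : Type*} [DecidableEq β] (P : Finset ι) (φ : ι → β) :
    #P ^ 2 ≤ #(P.image φ) * #{p ∈ P ×ˢ P | φ p.1 = φ p.2} := by
  have hfiber : ∑ b ∈ P.image φ, #{p ∈ P | φ p = b} ^ 2 = #{p ∈ P ×ˢ P | φ p.1 = φ p.2} := by
    rw [card_eq_sum_card_fiberwise (f := fun p => φ p.1) (t := P.image φ)]
    · refine sum_congr rfl fun b _ => ?_
      rw [sq, ← card_product, ← filter_product, filter_filter]
      exact congrArg card (filter_congr fun p _ => by grind)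
    · exact fun p hp => mem_image_of_mem φ (mem_product.1 (mem_filter.1 hp).1).1
  rw [card_eq_sum_card_image φ P, ← hfiber]
  exact sq_sum_le_card_mul_sum_sq

lemma card_sq_mul_ite_add_card_sq_le {ι β : Type*} [DecidableEq β] [Fintype β] (P : Finset ι)
    (φ : ι → β) :
    #P ^ 2 * (if 2 * #(P.image φ) ≤ Fintype.card β then 1 else 0) + #P ^ 2
      ≤ Fintype.card β * #{p ∈ P ×ˢ P | φ p.1 = φ p.2} := by
  have hCS := card_sq_le_card_image_mul_card_eq P φ
  have hle : #(P.image φ) ≤ Fintype.card β := card_le_univ _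
  split_ifs <;> nlinarith

/-! ### Values of `f_l` in a window -/

lemma fl_add_right (l : Fin k → ZMod n) (y z : Fin k → ℤ) : fl l (y + z) = fl l y + fl l z := by
  simp [fl, add_mul, sum_add_distrib]

lemma fl_sub_right (l : Fin k → ZMod n) (y z : Fin k → ℤ) : fl l (y - z) = fl l y - fl l z := by
  simp [fl, sub_mul, sum_sub_distrib]

lemma fl_add_single (l : Fin k → ZMod n) (y : Fin k → ℤ) (i : Fin k) (x : ZMod n) :
    fl (l + Pi.single i x) y = fl l y + (y i : ZMod n) * x := by
  simp [fl, mul_add, sum_add_distrib, Pi.single_apply]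

-- Resampling the single coordinate `l i` already spreads `f_l(y)` over the cycle.
lemma sum_lProb_fl_eq_add_le (y : Fin k → ℤ) (i : Fin k) (r : ZMod n) (W : ℕ) :
    ∑ j ∈ range W, lProb n k (fun l => fl l y = r + (j : ℕ)) ≤ (W + (y i).gcd n) / n := by
  rw [sum_lProb_eq_expect_card, ← expect_expect_add (Pi.single (M := fun _ => ZMod n) i)]
  refine expect_le univ_nonempty fun l _ => ?_
  have hcount := sum_card_intCast_mul_eq_add_le (y i) (r - fl l y) W
  simp only [fl_add_single, Fintype.expect_eq_sum_div_card, ZMod.card]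
  gcongr
  simp only [sub_add_eq_add_sub, eq_sub_iff_add_eq'] at hcount
  exact_mod_cast hcount

lemma sum_lProb_fl_eq_add_le_of_ne_zero {y : Fin k → ℤ} (hy : y ≠ 0) {m : ℕ}
    (hm : ∀ i, (y i).natAbs ≤ m) (r : ZMod n) (W : ℕ) :
    ∑ j ∈ range W, lProb n k (fun l => fl l y = r + (j : ℕ)) ≤ (W + m) / n := by
  obtain ⟨i, hi⟩ := Function.ne_iff.1 hy
  refine (sum_lProb_fl_eq_add_le y i r W).trans ?_
  gcongr
  exact (Int.gcd_le_natAbs_left _ hi).trans (hm i)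

lemma cycleDist_zero_right (x : ZMod n) : cycleDist n x 0 = x.valMinAbs.natAbs := by
  rw [cycleDist, ← ZMod.valMinAbs_natAbs_eq_min, zero_sub, ZMod.natAbs_valMinAbs_neg]

lemma cycleDist_intCast_zero_le (t : ℤ) : cycleDist n (t : ZMod n) 0 ≤ t.natAbs := by
  rw [cycleDist_zero_right]
  exact ZMod.natAbs_min_of_le_div_two n _ _ (ZMod.coe_valMinAbs _) (ZMod.natAbs_valMinAbs_le _)

lemma exists_eq_neg_add_of_cycleDist_zero_le {x : ZMod n} {t : ℕ} (h : cycleDist n x 0 ≤ t) :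
    ∃ j ∈ range (2 * t + 1), x = -(t : ZMod n) + (j : ℕ) := by
  rw [cycleDist_zero_right] at h
  obtain ⟨j, hj⟩ := Int.eq_ofNat_of_zero_le (show 0 ≤ x.valMinAbs + t by omega)
  refine ⟨j, mem_range.2 (by omega), ?_⟩
  have hcast : ((x.valMinAbs + t : ℤ) : ZMod n) = (j : ℤ) := congrArg _ hj
  push_cast [ZMod.coe_valMinAbs] at hcast
  rw [← hcast, add_comm, add_neg_cancel_right]

/-! ### No short combination is close to zero -/

lemma card_piFinset_Ioo_neg_le (k m : ℕ) :
    #(Fintype.piFinset fun _ : Fin k => Ioo (-(m : ℤ)) m) ≤ (2 * m) ^ k := by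
  rw [Fintype.card_piFinset_const, Int.card_Ioo]
  gcongr
  omega

lemma lProb_exists_cycleDist_le (m : ℕ) {τ : ℝ} (hτ : 0 ≤ τ) :
    lProb n k (fun l => ∃ y : Fin k → ℤ, y ≠ 0 ∧ (∀ i, (y i).natAbs < m) ∧
      (cycleDist n (fl l y) 0 : ℝ) ≤ τ) ≤ (2 * m) ^ k * ((2 * τ + 1 + m) / n) := by
  let Y := {y ∈ Fintype.piFinset fun _ : Fin k => Ioo (-(m : ℤ)) m | y ≠ 0}
  have hY (y : Fin k → ℤ) : y ∈ Y ↔ (∀ i, (y i).natAbs < m) ∧ y ≠ 0 := by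
    rw [mem_filter, Fintype.mem_piFinset]
    refine and_congr_left fun _ => forall_congr' fun i => ?_
    rw [mem_Ioo]
    omega
  have hYcard : (#Y : ℝ) ≤ (2 * m) ^ k :=
    mod_cast (card_filter_le _ _).trans (card_piFinset_Ioo_neg_le k m)
  calc _ ≤ ∑ p ∈ Y ×ˢ range (2 * ⌊τ⌋₊ + 1),
          lProb n k (fun l => fl l p.1 = -(⌊τ⌋₊ : ZMod n) + (p.2 : ℕ)) := by
        refine lProb_le_sum_of_forall_exists _ fun l ⟨y, hy, hym, hd⟩ => ?_
        obtain ⟨j, hj, hjy⟩ := exists_eq_neg_add_of_cycleDist_zero_le (Nat.le_floor hd)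
        exact ⟨(y, j), mem_product.2 ⟨(hY y).2 ⟨hym, hy⟩, hj⟩, hjy⟩
    _ ≤ ∑ _y ∈ Y, (2 * τ + 1 + m) / n := by
        rw [sum_product]
        refine sum_le_sum fun y hy => ?_
        refine (sum_lProb_fl_eq_add_le_of_ne_zero ((hY y).1 hy).2
          (fun i => (((hY y).1 hy).1 i).le) _ _).trans ?_
        push_cast
        gcongr
        exact Nat.floor_le hτ
    _ ≤ (2 * m) ^ k * ((2 * τ + 1 + m) / n) := by
        rw [sum_const, nsmul_eq_mul]
        gcongr

lemma lProb_exists_cycleDist_le_of_pow_le {m : ℕ} (hm : 1 ≤ m) {ε : ℝ}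
    (hmn : (m : ℝ) ^ (k + 1) ≤ ε * n) :
    lProb n k (fun l => ∃ y : Fin k → ℤ, y ≠ 0 ∧ (∀ i, (y i).natAbs < m) ∧
      (cycleDist n (fl l y) 0 : ℝ) ≤ ε * (n / m ^ k)) ≤ 4 * 2 ^ k * ε := by
  have hn : (0 : ℝ) < n := Nat.cast_pos.2 (NeZero.pos n)
  have hm1 : (1 : ℝ) ≤ m := Nat.one_le_cast.2 hm
  have hε : 0 ≤ ε := nonneg_of_mul_nonneg_left (le_trans (by positivity) hmn) hn
  refine (lProb_exists_cycleDist_le m (by positivity)).trans ?_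
  calc (2 * m : ℝ) ^ k * ((2 * (ε * (n / m ^ k)) + 1 + m) / n)
      ≤ (2 * m : ℝ) ^ k * ((2 * (ε * (n / m ^ k)) + m + m) / n) := by gcongr
    _ = 2 * 2 ^ k * ε + 2 * 2 ^ k * m ^ (k + 1) / n := by
        rw [mul_pow]
        field_simp
        ring
    _ ≤ 2 * 2 ^ k * ε + 2 * 2 ^ k * (ε * n) / n := by gcongr
    _ = 4 * 2 ^ k * ε := by
        field_simp
        ring

/-! ### Thickened boxes cover the cycle -/

/-- The box `[0, M)^k` of integer points. -/
def posBox (k M : ℕ) : Finset (Fin k → ℤ) := Fintype.piFinset fun _ => Ico 0 (M : ℤ)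

/-- The union of the windows `f_l(a) + {0, …, w - 1}` over the points `a` of `[0, M)^k`. -/
def coveredSet (l : Fin k → ZMod n) (M w : ℕ) : Finset (ZMod n) :=
  (posBox k M ×ˢ range w).image fun p => fl l p.1 + (p.2 : ZMod n)

lemma card_posBox (k M : ℕ) : #(posBox k M) = M ^ k := by
  simp [posBox]

lemma natAbs_sub_lt_of_mem_posBox {M : ℕ} {a a' : Fin k → ℤ} (ha : a ∈ posBox k M)
    (ha' : a' ∈ posBox k M) (i : Fin k) : (a i - a' i).natAbs < M := by
  have hi := mem_Ico.1 (Fintype.mem_piFinset.1 ha i)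
  have hi' := mem_Ico.1 (Fintype.mem_piFinset.1 ha' i)
  omega

lemma sum_lProb_fl_add_eq_le (hk : 1 ≤ k) {M : ℕ} (w : ℕ) {a a' : Fin k → ℤ}
    (ha : a ∈ posBox k M) (ha' : a' ∈ posBox k M) (j : ℕ) :
    ∑ j' ∈ range w, lProb n k (fun l => fl l a + (j : ZMod n) = fl l a' + (j' : ℕ))
      ≤ (w + M) / n + if a = a' then 1 else 0 := by
  have hiff (l : Fin k → ZMod n) (j' : ℕ) :
      fl l a + (j : ZMod n) = fl l a' + (j' : ℕ) ↔ fl l (a - a') = -(j : ZMod n) + (j' : ℕ) := by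
    rw [fl_sub_right, sub_eq_iff_eq_add, neg_add_eq_sub, sub_add_eq_add_sub, eq_sub_iff_add_eq,
      add_comm (j' : ZMod n)]
  simp only [hiff]
  split_ifs with haa
  · have hn : (n : ℝ) ≠ 0 := Nat.cast_ne_zero.2 (NeZero.ne n)
    refine (sum_lProb_fl_eq_add_le (a - a') ⟨0, hk⟩ _ w).trans ?_
    rw [haa, sub_self, Pi.zero_apply, Int.gcd_zero_left, Int.natAbs_natCast, add_div,
      div_self hn]
    gcongr
    exact le_add_of_nonneg_right M.cast_nonneg
  · rw [add_zero]
    refine sum_lProb_fl_eq_add_le_of_ne_zero (sub_ne_zero.2 haa) (fun i => ?_) _ w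
    exact (natAbs_sub_lt_of_mem_posBox ha ha' i).le

lemma sum_lProb_collision_le (hk : 1 ≤ k) (M w : ℕ) :
    ∑ q ∈ (posBox k M ×ˢ range w) ×ˢ (posBox k M ×ˢ range w),
        lProb n k (fun l => fl l q.1.1 + (q.1.2 : ZMod n) = fl l q.2.1 + (q.2.2 : ZMod n))
      ≤ M ^ k * w * (1 + M ^ k * ((w + M) / n)) := by
  rw [sum_product]
  have hrow (p) (hp : p ∈ posBox k M ×ˢ range w) : ∑ p' ∈ posBox k M ×ˢ range w,
      lProb n k (fun l => fl l p.1 + (p.2 : ZMod n) = fl l p'.1 + (p'.2 : ZMod n))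
        ≤ 1 + M ^ k * ((w + M) / n) := by
    have ha := (mem_product.1 hp).1
    calc _ ≤ ∑ a' ∈ posBox k M, ((w + M) / n + if p.1 = a' then 1 else 0 : ℝ) := by
          rw [sum_product]
          exact sum_le_sum fun a' ha' => sum_lProb_fl_add_eq_le hk w ha ha' p.2
      _ = 1 + M ^ k * ((w + M) / n) := by
          rw [sum_add_distrib, sum_ite_eq, if_pos ha, sum_const, card_posBox, nsmul_eq_mul,
            Nat.cast_pow, add_comm]
  refine (sum_le_card_nsmul _ _ _ hrow).trans_eq ?_
  rw [card_product, card_posBox, card_range, nsmul_eq_mul, Nat.cast_mul, Nat.cast_pow]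

-- Markov's inequality for `n * collisions - (M ^ k * w) ^ 2`, which is nonnegative by
-- Cauchy–Schwarz and at least `(M ^ k * w) ^ 2` if at most half of the cycle is covered.
lemma lProb_two_mul_card_coveredSet_le (hk : 1 ≤ k) {M w : ℕ} (hM : 0 < M) (hw : 0 < w) :
    lProb n k (fun l => 2 * #(coveredSet l M w) ≤ n) ≤ n / (M ^ k * w) + M / w := by
  let P := posBox k M ×ˢ range w
  have hn : (0 : ℝ) < n := Nat.cast_pos.2 (NeZero.pos n)
  have hP : (#P : ℝ) = M ^ k * w := by simp [P, card_posBox]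
  have hP0 : (0 : ℝ) < #P := by rw [hP]; positivity
  have hpoint (l : Fin k → ZMod n) :
      (#P : ℝ) ^ 2 * (if 2 * #(coveredSet l M w) ≤ n then 1 else 0) + (#P : ℝ) ^ 2
        ≤ n * #{q ∈ P ×ˢ P | fl l q.1.1 + (q.1.2 : ZMod n) = fl l q.2.1 + (q.2.2 : ZMod n)} := by
    have hCS := card_sq_mul_ite_add_card_sq_le P fun p => fl l p.1 + (p.2 : ZMod n)
    rw [ZMod.card] at hCS
    exact_mod_cast hCS
  have hmean : (#P : ℝ) ^ 2 * lProb n k (fun l => 2 * #(coveredSet l M w) ≤ n) + (#P : ℝ) ^ 2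
      ≤ n * (#P * (1 + M ^ k * ((w + M) / n))) := by
    refine (mul_lProb_add_le hpoint).trans ?_
    rw [hP]
    gcongr
    exact sum_lProb_collision_le hk M w
  have hrhs : n * (#P * (1 + M ^ k * ((w + M) / n)))
      = (#P : ℝ) ^ 2 * (n / (M ^ k * w) + M / w) + (#P : ℝ) ^ 2 := by
    rw [hP]
    field_simp
    ring
  rw [hrhs, add_le_add_iff_right] at hmean
  exact le_of_mul_le_mul_left hmean (by positivity)

lemma exists_mem_add_mem_of_card_lt {G : Type*} [AddGroup G] [Fintype G] {B : Finset G}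
    (hB : Fintype.card G < 2 * #B) (g : G) : ∃ z ∈ B, z + g ∈ B := by
  have hcard : #(univ : Finset G) < #(B.map (addRightEmbedding g)) + #B := by
    rw [card_map, card_univ, ← two_mul]
    exact hB
  obtain ⟨x, hx⟩ := inter_nonempty_of_card_lt_card_add_card (subset_univ _) (subset_univ _) hcard
  obtain ⟨hx', hxB⟩ := mem_inter.1 hx
  obtain ⟨z, hz, rfl⟩ := mem_map.1 hx'
  exact ⟨z, hz, hxB⟩

lemma IsSign.mul_mem_Ioo {b : Fin k → ℤ} (hb : IsSign b) {M : ℕ} {a a' : Fin k → ℤ}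
    (ha : a ∈ posBox k M) (ha' : a' ∈ posBox k M) (i : Fin k) :
    b i * (M * b i + a i - a' i) ∈ Set.Ioo (0 : ℤ) (2 * M : ℕ) := by
  have hlt := natAbs_sub_lt_of_mem_posBox ha ha' i
  rw [Set.mem_Ioo]
  obtain h | h := hb i <;> rw [h] <;> omega

-- `coveredSet l M w` meets its translate by `f_l(M b)`: the difference of two representations of
-- a common point gives `y`.
lemma exists_cycleDist_lt_of_lt_card_coveredSet (hk : 1 ≤ k) {l : Fin k → ZMod n} {M w : ℕ}
    (hcov : n < 2 * #(coveredSet l M w)) {b : Fin k → ℤ} (hb : IsSign b) :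
    ∃ y : Fin k → ℤ, inYmb b (2 * M) y ∧ y ≠ 0 ∧ cycleDist n (fl l y) 0 < w := by
  let u : Fin k → ℤ := fun i => M * b i
  obtain ⟨z, hz, hzu⟩ := exists_mem_add_mem_of_card_lt (by rwa [ZMod.card]) (fl l u)
  obtain ⟨⟨a, j⟩, hp, rfl⟩ := mem_image.1 hz
  obtain ⟨⟨a', j'⟩, hp', heq⟩ := mem_image.1 hzu
  obtain ⟨ha, hj⟩ := mem_product.1 hp
  obtain ⟨ha', hj'⟩ := mem_product.1 hp'
  have hbox (i : Fin k) := hb.mul_mem_Ioo ha ha' i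
  have hval : fl l (u + a - a') = ((j' - j : ℤ) : ZMod n) := by
    rw [fl_sub_right, fl_add_right]
    push_cast
    linear_combination -heq
  refine ⟨u + a - a', fun i => ⟨(hbox i).1.le, (hbox i).2⟩, fun h0 => ?_, ?_⟩
  · exact (hbox ⟨0, hk⟩).1.ne' (mul_eq_zero_of_right _ (congrFun h0 _))
  · rw [hval]
    refine (cycleDist_intCast_zero_le _).trans_lt ?_
    simp only [mem_range] at hj hj'
    omega

lemma lProb_two_mul_card_coveredSet_le_of_pow_le (hk : 1 ≤ k) {m : ℕ} (hm : 2 ≤ m)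
    (hmn : (m : ℝ) ^ (k + 1) ≤ n) {α : ℝ} (hα : 0 < α) :
    lProb n k (fun l => 2 * #(coveredSet l (m / 2) ⌈α * (n / m ^ k)⌉₊) ≤ n)
      ≤ 2 * 3 ^ k / α := by
  have hn : (0 : ℝ) < n := Nat.cast_pos.2 (NeZero.pos n)
  have : (0 : ℝ) < m := Nat.cast_pos.2 (by omega)
  have hM : 0 < m / 2 := by omega
  have hmM : (m : ℝ) ≤ 3 * (m / 2 : ℕ) := mod_cast (show m ≤ 3 * (m / 2) by omega)
  have hMm : ((m / 2 : ℕ) : ℝ) ≤ m := mod_cast Nat.div_le_self m 2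
  have hw : α * (n / m ^ k) ≤ ⌈α * (n / m ^ k)⌉₊ := Nat.le_ceil _
  have hfirst : n / ((m / 2 : ℕ) ^ k * ⌈α * (n / m ^ k)⌉₊ : ℝ) ≤ 3 ^ k / α := by
    calc n / ((m / 2 : ℕ) ^ k * ⌈α * (n / m ^ k)⌉₊ : ℝ)
        ≤ n / ((m / 3) ^ k * (α * (n / m ^ k))) := by
          gcongr
          linarith
      _ = 3 ^ k / α := by
          rw [div_pow]
          field_simp
  have hsecond : (m / 2 : ℕ) / (⌈α * (n / m ^ k)⌉₊ : ℝ) ≤ 3 ^ k / α := by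
    calc (m / 2 : ℕ) / (⌈α * (n / m ^ k)⌉₊ : ℝ) ≤ m / (α * (n / m ^ k)) := by gcongr
      _ = m ^ (k + 1) / n / α := by
          rw [pow_succ']
          field_simp
      _ ≤ 3 ^ k / α := by
          gcongr
          exact (div_le_one_of_le₀ hmn hn.le).trans (one_le_pow₀ (by norm_num))
  refine (lProb_two_mul_card_coveredSet_le hk hM (Nat.ceil_pos.2 (by positivity))).trans ?_
  linarith [mul_div_assoc 2 ((3 : ℝ) ^ k) α]

lemma natAbs_lt_of_inYmb {b y : Fin k → ℤ} (hb : IsSign b) {m : ℕ} (hy : inYmb b m y)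
    (i : Fin k) : (y i).natAbs < m := by
  have hi := hy i
  obtain h | h := hb i <;> rw [h] at hi <;> omega

lemma inYmb.mono {b y : Fin k → ℤ} {m m' : ℕ} (hy : inYmb b m y) (h : m ≤ m') : inYmb b m' y :=
  fun i => ⟨(hy i).1, (hy i).2.trans_le (mod_cast h)⟩

/-! ### The growth of `m(n)` -/

section

open Filter Asymptotics

lemma tendsto_const_mul_natCast_rpow_atTop {c e : ℝ} (hc : 0 < c) (he : 0 < e) :
    Tendsto (fun n : ℕ => c * (n : ℝ) ^ e) atTop atTop :=
  ((tendsto_rpow_atTop he).comp tendsto_natCast_atTop_atTop).const_mul_atTop hc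

lemma tendsto_mOf_atTop (k : ℕ) {c : ℝ} (hc : 0 < c) : Tendsto (mOf k c) atTop atTop :=
  tendsto_nat_ceil_atTop.comp (tendsto_const_mul_natCast_rpow_atTop hc (by positivity))

lemma isLittleO_mOf_pow_succ (k : ℕ) {c : ℝ} (hc : 0 < c) :
    (fun n => (mOf k c n : ℝ) ^ (k + 1)) =o[atTop] fun n : ℕ => (n : ℝ) := by
  let x (n : ℕ) : ℝ := c * (n : ℝ) ^ (1 / (2 * (k : ℝ) + 2))
  have hx : Tendsto x atTop atTop := tendsto_const_mul_natCast_rpow_atTop hc (by positivity)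
  have hmx : (fun n => (mOf k c n : ℝ)) ~[atTop] x :=
    (isEquivalent_nat_ceil (R := ℝ)).comp_tendsto hx
  have hpow (n : ℕ) : x n ^ (2 * k + 2) = c ^ (2 * k + 2) * n := by
    rw [mul_pow, ← Real.rpow_mul_natCast n.cast_nonneg]
    push_cast
    rw [one_div_mul_cancel (by positivity), Real.rpow_one]
  calc (fun n => (mOf k c n : ℝ) ^ (k + 1)) =O[atTop] fun n => x n ^ (k + 1) :=
        hmx.isBigO.pow (k + 1)
    _ =o[atTop] fun n => x n ^ (2 * k + 2) :=
        (isLittleO_pow_pow_atTop_of_lt (by omega)).comp_tendsto hx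
    _ =O[atTop] fun n : ℕ => (n : ℝ) := by
        simp only [hpow]
        exact isBigO_const_mul_self _ _ _

lemma eventually_two_le_mOf_and_pow_succ_le (k : ℕ) {c ε : ℝ} (hc : 0 < c) (hε : 0 < ε) :
    ∀ᶠ n : ℕ in atTop, 2 ≤ mOf k c n ∧ (mOf k c n : ℝ) ^ (k + 1) ≤ ε * n := by
  filter_upwards [(tendsto_mOf_atTop k hc).eventually_ge_atTop 2,
    (isLittleO_mOf_pow_succ k hc).def hε] with n h2 hn
  refine ⟨h2, ?_⟩
  rwa [Real.norm_of_nonneg (by positivity), Real.norm_natCast] at hn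

end

end

theorem point_near_zero_exists_general (k : ℕ) (hk : 1 ≤ k) (δ₂ : ℝ) (h0 : 0 < δ₂) (h1 : δ₂ < 1) :
    ∃ α₁ α₂ ε : ℝ, 0 < α₁ ∧ 0 < ε ∧ ∀ (n m : ℕ) [NeZero n], 2 ≤ m → (m : ℝ) ^ (k + 1) ≤ ε * n →
      1 - δ₂ ≤ lProb n k (fun l =>
        ∀ b : Fin k → ℤ, IsSign b →
          ∃ y : Fin k → ℤ, inYmb b m y ∧ y ≠ 0 ∧
            α₁ * (n / m ^ k) < (cycleDist n (fl l y) 0 : ℝ) ∧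
            (cycleDist n (fl l y) 0 : ℝ) ≤ α₂ * (n / m ^ k)) := by
  have hε : 0 < δ₂ / (8 * 2 ^ k) := by positivity
  refine ⟨δ₂ / (8 * 2 ^ k), 4 * 3 ^ k / δ₂, δ₂ / (8 * 2 ^ k), hε, hε, fun n m _ hm hmn => ?_⟩
  have hε1 : δ₂ / (8 * 2 ^ k) ≤ 1 :=
    div_le_one_of_le₀ (by linarith [one_le_pow₀ (n := k) (one_le_two (α := ℝ))]) (by positivity)
  have hnear := lProb_exists_cycleDist_le_of_pow_le (by omega : 1 ≤ m) hmn
  have hcov := lProb_two_mul_card_coveredSet_le_of_pow_le hk hm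
    (hmn.trans (mul_le_of_le_one_left n.cast_nonneg hε1)) (α := 4 * 3 ^ k / δ₂) (by positivity)
  -- The constants are chosen so that either bad event has probability at most `δ₂ / 2`.
  have hδ : 1 - δ₂ = 1 - (4 * 2 ^ k * (δ₂ / (8 * 2 ^ k)) + 2 * 3 ^ k / (4 * 3 ^ k / δ₂)) := by
    field_simp
    ring
  rw [hδ]
  refine (sub_le_sub_left (add_le_add hnear hcov) 1).trans
    (one_sub_add_le_lProb fun l hfar hlarge b hb => ?_)
  obtain ⟨y, hy, hy0, hd⟩ := exists_cycleDist_lt_of_lt_card_coveredSet hk (not_le.1 hlarge) hb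
  have hym : inYmb b m y := hy.mono (Nat.mul_div_le m 2)
  refine ⟨y, hym, hy0, ?_, (Nat.lt_ceil.1 hd).le⟩
  by_contra! hle
  exact hfar ⟨y, hy0, natAbs_lt_of_inYmb hb hym, hle⟩

/-- for every `0 < δ₂ < 1` there are `α₁ > 0`, `α₂ < ∞` and `N` such that
for all `n ≥ N`, with probability at least `1 - δ₂` over `l`: for every sign pattern `b`
there is a nonzero `y ∈ Y_m^b` with `α₁ s < d(f_l(y), 0) ≤ α₂ s`. -/
theorem point_near_zero_exists (k : ℕ) (hk : 1 ≤ k) (c : ℝ) (hc : 0 < c)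
    (δ₂ : ℝ) (h0 : 0 < δ₂) (h1 : δ₂ < 1) :
    ∃ α₁ α₂ : ℝ, 0 < α₁ ∧ ∃ N : ℕ, ∀ (n : ℕ) [NeZero n], N ≤ n →
      1 - δ₂ ≤ lProb n k (fun l =>
        ∀ b : Fin k → ℤ, IsSign b →
          ∃ y : Fin k → ℤ, inYmb b (mOf k c n) y ∧ y ≠ 0 ∧
            α₁ * sOf k c n < (cycleDist n (fl l y) 0 : ℝ) ∧
            (cycleDist n (fl l y) 0 : ℝ) ≤ α₂ * sOf k c n) := by
  obtain ⟨α₁, α₂, ε, hα₁, hε, h⟩ := point_near_zero_exists_general k hk δ₂ h0 h1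
  obtain ⟨N, hN⟩ := (eventually_two_le_mOf_and_pow_succ_le k hc hε).exists_forall_of_atTop
  exact ⟨α₁, α₂, hα₁, N, fun n _ hn => h n (mOf k c n) (hN n hn).1 (hN n hn).2⟩
end
end
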